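/- arXiv:2503.24094 — 3 statements merged into one kernel-verified Lean document; each statement's English description precedes it below -/
import Mathlib

section
/- Let n ≥ 2 and let φ : M_n(F) → M_n(F) be any map satisfying φ(X ∘ Y) = φ(X) ∘ φ(Y) for all X, Y ∈ M_n(F). Then exactly one of the following holds: (a) φ is constant, equal to some idempotent matrix P ∈ M_n(F); or (b) there exist an invertible matrix T ∈ M_n(F) and an injective ring homomorphism ω : F → F such that either φ(X) = T·ω(X)·T⁻¹ for all X ∈ M_n(F), or φ(X) = T·(ω(X))ᵀ·T⁻¹ for all X ∈ M_n(F), where ω(X) denotes the matrix obtained by applying ω to each entry of X and (·)ᵀ denotes matrix transposition. -/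
open Matrix

/-!
Write `X ∘ Y` for the normalized Jordan product and `E i j` for the matrix units.

The element `P = φ 0` is idempotent and satisfies `P ∘ φ X = P`, hence `P * φ X = φ X * P = P`, so
`ψ = φ - P` is again Jordan multiplicative and `ψ 0 = 0`. If `ψ` vanishes identically, `φ` is
constant. Otherwise `ψ` has the required form by `classify_zero`; in particular `ψ 1 = 1`, and as
`P * ψ 1 = 0` this gives `P = 0` and `φ = ψ`.

For `classify_zero`, a map with `ψ 0 = 0` killing one `E i i` kills everything (`kernel_all`), so
the `ψ (E i i)` are nonzero pairwise orthogonal idempotents; there are as many as the size of the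
matrices, so after a conjugation `ψ (E i i) = E i i` (`exists_conj`). For such a normalized map,
multiplying by the `E i i` shows that `ψ` maps diagonal matrices to diagonal matrices and
`span (E i j, E j i)` into itself, and that `ψ (c • X) = ω c • ψ X` for one multiplicative
`ω : F → F`. Then:

* `E i i ∘ E i j = 2⁻¹ • E i j` forces `ω 2⁻¹ = 2⁻¹`;
* a fourfold product recovers `X i i`, so `ψ X i i = ω (X i i)` (`map_diag_entry`);
* multiplying `E i j` by a diagonal matrix gives additivity of `ω`;
* the `(i, i)` entry of `E i j ∘ X` determines the off-diagonal entries of `ψ X`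
  (`entry_relation`);
* `E i j ∘ E i j = 0` makes `ψ (E i j)` a multiple of `E i j` or of `E j i`, and the products
  `E i j ∘ E j k` show that the same alternative holds for all pairs.

In the first alternative `ψ (E i j) = a i j • E i j` with `a i k = a i j * a j k`, so `ψ` is `ω`
followed by conjugation by a diagonal matrix; the second reduces to the first by transposition.
-/

set_option linter.unusedSectionVars false

/-! ### The Jordan product -/

section
variable {F : Type*} [Field F] {ι : Type*} [Fintype ι] [DecidableEq ι]

/-- The normalized Jordan product of matrices. -/
def jord (X Y : Matrix ι ι F) : Matrix ι ι F := (2 : F)⁻¹ • (X * Y + Y * X)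

/-- `φ` is multiplicative for the normalized Jordan product. -/
def JMul (φ : Matrix ι ι F → Matrix ι ι F) : Prop := ∀ X Y, φ (jord X Y) = jord (φ X) (φ Y)

lemma single_mul_apply' (i j : ι) (c : F) (Z : Matrix ι ι F) (k l : ι) :
    (single i j c * Z) k l = if k = i then c * Z j l else 0 := by
  split_ifs with h
  · subst h; simp
  · simp [h]

lemma mul_single_apply' (i j : ι) (c : F) (Z : Matrix ι ι F) (k l : ι) :
    (Z * single i j c) k l = if l = j then Z k i * c else 0 := by
  split_ifs with h
  · subst h; simp
  · simp [h]

lemma jord_single (i j : ι) (c : F) (Z : Matrix ι ι F) (k l : ι) :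
    jord (single i j c) Z k l =
      2⁻¹ * ((if k = i then c * Z j l else 0) + if l = j then Z k i * c else 0) := by
  simp [jord, single_mul_apply', mul_single_apply', ]

lemma jord_comm (X Y : Matrix ι ι F) : jord X Y = jord Y X := by
  simp [jord, add_comm]

lemma jord_add (X Y Z : Matrix ι ι F) : jord (X + Y) Z = jord X Z + jord Y Z := by
  simp only [jord, add_mul, mul_add, ← smul_add]; congr 1; abel

lemma jord_diagonal (d : ι → F) (Z : Matrix ι ι F) (k l : ι) :
    jord (diagonal d) Z k l = 2⁻¹ * (d k + d l) * Z k l := by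
  simp [jord, diagonal_mul, mul_diagonal]; ring

/-! ### The kernel and idempotents -/

/-- A Jordan-multiplicative map killing one diagonal matrix unit vanishes identically: the set of
killed matrices is closed under products with arbitrary matrices, and it contains the diagonal
projections onto larger and larger coordinate subspaces, up to the identity. -/
lemma kernel_all (h2 : (2 : F) ≠ 0) {φ : Matrix ι ι F → Matrix ι ι F} (hφ : JMul φ)
    (i : ι) (hi : φ (single i i 1) = 0) (X : Matrix ι ι F) : φ X = 0 := by
  have jz : ∀ Z : Matrix ι ι F, jord 0 Z = 0 := fun Z => by simp [jord]
  have key : ∀ s : Finset ι, i ∉ s → φ (diagonal fun k => if k = i ∨ k ∈ s then 1 else 0) = 0 := by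
    intro s
    induction s using Finset.induction_on with
    | empty =>
      intro _
      convert hi
      ext a b
      simp [diagonal_apply, single_apply]
      grind
    | insert j s hj ih =>
      intro his
      simp only [Finset.mem_insert, not_or] at his
      have ih := ih his.2
      have hij := his.1
      set A : Matrix ι ι F := diagonal fun k => if k ∈ s then 1 else 0 with hA
      set S : Matrix ι ι F := single i j 1 + single j i 1 with hS
      -- `A + S` is a symmetric involution on the larger coordinate subspace that is supported in the
      -- rows and columns meeting the smaller one.
      have e1 : A + S = jord (diagonal fun k => if k = i ∨ k ∈ s then 1 else 0) (A + S + S) := by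
        ext k l
        rw [jord_diagonal]
        simp only [hA, hS, Matrix.add_apply, diagonal_apply, single_apply]
        grind
      have e2 : (diagonal fun k => if k = i ∨ k ∈ insert j s then 1 else 0)
          = jord (A + S) (A + S) := by
        ext k l
        rw [jord_add, hS, jord_add, ← hS, Matrix.add_apply, Matrix.add_apply, hA, jord_diagonal, jord_single, jord_single]
        simp only [hS, Matrix.add_apply, diagonal_apply, single_apply]
        grind
      rw [e2, hφ, e1, hφ, ih, jz, jz]
  have h1 : φ 1 = 0 := by
    convert key (Finset.univ.erase i) (by simp)
    ext a b
    simp [one_apply, diagonal_apply]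
    grind
  have : X = jord 1 X := by
    simp [jord, ← two_smul F, smul_smul, h2]
  rw [this, hφ, h1, jz]

/-- For an idempotent `P`, Jordan orthogonality `P ∘ Q = 0` implies `P * Q = 0`. -/
lemma idem_orth (h2 : (2 : F) ≠ 0) {P Q : Matrix ι ι F} (hP : P * P = P) 
    (h : jord P Q = 0) : P * Q = 0 := by
  have h' : P * Q + Q * P = 0 := by
    simpa only [jord, smul_eq_zero, inv_eq_zero, h2, false_or] using h
  have a : P * Q + P * Q * P = 0 := by
    have := congrArg (P * ·) h'
    simpa [mul_add, ← mul_assoc, hP] using this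
  have b : P * Q * P + Q * P = 0 := by
    have := congrArg (· * P) h'
    simpa [add_mul, mul_assoc, hP] using this
  have c : P * Q = Q * P := by
    rw [← sub_eq_zero]
    calc _ = (P * Q + P * Q * P) - (P * Q * P + Q * P) := by abel
      _ = 0 := by rw [a, b, sub_zero]
  rw [← c, ← two_smul F] at h'
  simpa [h2] using h'

/-- If `P` is idempotent, `P ∘ Y = P` forces `P * Y = Y * P = P`. -/
lemma idem_abs (h2 : (2 : F) ≠ 0) {P Y : Matrix ι ι F} (hP : P * P = P) 
    (h : jord P Y = P) : P * Y = P ∧ Y * P = P := by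
  have h' : jord P (Y - 1) = 0 := by
    have : jord P (Y - 1) = jord P Y - P := by
      have : P * (Y - 1) + (Y - 1) * P = P * Y + Y * P - (2 : F) • P := by
        rw [two_smul]; noncomm_ring
      rw [jord, this, smul_sub, smul_smul, inv_mul_cancel₀ h2, one_smul, jord]
    rw [this, h, sub_self]
  have a := idem_orth h2 hP h'
  have b : (Y - 1) * P = 0 := by
    simpa [jord, a, h2] using h'
  constructor
  · simpa [mul_sub, sub_eq_zero] using a
  · simpa [sub_mul, sub_eq_zero] using b

lemma jord_self (h2 : (2 : F) ≠ 0) (X : Matrix ι ι F) : jord X X = X * X := by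
  rw [jord, ← two_smul F, smul_smul, inv_mul_cancel₀ h2, one_smul]

/-- A full family of nonzero orthogonal idempotents is conjugate to the diagonal matrix units. -/
lemma exists_conj (Q : ι → Matrix ι ι F) (hQ : ∀ i, Q i * Q i = Q i) (hne : ∀ i, Q i ≠ 0)
    (ho : ∀ i j, i ≠ j → Q i * Q j = 0) :
    ∃ S : Matrix ι ι F, IsUnit S ∧ ∀ i, Q i * S = S * single i i 1 := by
  have hw : ∀ i, ∃ w, Q i *ᵥ w ≠ 0 := by
    intro i
    by_contra! h
    apply hne i
    ext a b
    simpa using congrFun (h (Pi.single b 1)) a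
  choose w hw using hw
  -- The columns of `S` are nonzero vectors in the ranges of the `Q i`.
  set v : ι → ι → F := fun i => Q i *ᵥ w i with hv
  have hQv : ∀ i j, Q i *ᵥ v j = if i = j then v j else 0 := by
    intro i j
    simp only [hv, mulVec_mulVec]
    split_ifs with h
    · subst h; rw [hQ]
    · rw [ho i j h, zero_mulVec]
  have hli : LinearIndependent F v := by
    rw [Fintype.linearIndependent_iff]
    intro g hg i
    have := congrArg (Q i *ᵥ ·) hg
    simp only [mulVec_sum, mulVec_smul, hQv, mulVec_zero] at this
    simpa [hv, hw] using this
  refine ⟨(Matrix.of v)ᵀ, ?_, ?_⟩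
  · rw [isUnit_transpose]
    exact linearIndependent_rows_iff_isUnit.1 hli
  · intro i
    ext a b
    rw [mul_single_apply']
    have := congrFun (hQv i b) a
    simp only [mulVec, dotProduct] at this
    rw [mul_apply]
    refine this.trans ?_
    by_cases h : i = b
    · subst h; simp
    · simp [h, Ne.symm h]

/-! ### Normalized maps -/

/-- A Jordan-multiplicative map that fixes `0` and every diagonal matrix unit. -/
structure NormJ (φ : Matrix ι ι F → Matrix ι ι F) : Prop where
  mul : JMul φ
  zero : φ 0 = 0
  unit : ∀ i, φ (single i i 1) = single i i 1

namespace NormJ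
variable {φ : Matrix ι ι F → Matrix ι ι F} (h2 : (2 : F) ≠ 0) (H : NormJ φ)

include h2 H

lemma map_single (i : ι) (c : F) :
    φ (single i i c) = single i i (φ (single i i c) i i) := by
  have h : single i i c = jord (single i i 1) (single i i c) := by
    ext k l
    rw [jord_single]
    simp only [single_apply]
    grind
  have h' := congrArg φ h
  rw [H.mul, H.unit] at h'
  ext k l
  have := congrFun₂ h' k l
  rw [jord_single] at this
  simp only [single_apply]
  grind

lemma map_diagonal (d : ι → F) :
    φ (diagonal d) = diagonal fun i => φ (single i i (d i)) i i := by
  have h : ∀ i, φ (single i i (d i)) = jord (single i i 1) (φ (diagonal d)) := by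
    intro i
    rw [← H.unit i, ← H.mul]
    congr 1
    ext k l
    rw [jord_single]
    simp only [single_apply, diagonal_apply]
    grind
  ext k l
  have := congrFun₂ (h k) k l
  rw [H.map_single h2, jord_single] at this
  simp only [single_apply, diagonal_apply] at *
  grind

/-- The span of `E i j` and `E j i` is mapped into itself: its elements `S` satisfy `D ∘ S = S` for
`D = E i i + E j j`, and `E i i ∘ S = E j j ∘ S`. -/
lemma map_offdiag {i j : ι} (hij : i ≠ j) (a b : F) :
    φ (single i j a + single j i b) =
      single i j (φ (single i j a + single j i b) i j) +
      single j i (φ (single i j a + single j i b) j i) := by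
  set S := single i j a + single j i b with hS
  set D : Matrix ι ι F := diagonal fun k => if k = i ∨ k = j then 1 else 0 with hD
  have hD' : φ D = D := by
    rw [hD, H.map_diagonal h2]
    congr 1
    ext k
    split_ifs <;> simp [H.unit, H.zero]
  have h1 : jord D S = S := by
    ext k l
    rw [hD, jord_diagonal]
    simp only [hS, Matrix.add_apply, single_apply]
    grind
  have h3 : jord (single i i 1) S = jord (single j j 1) S := by
    ext k l
    rw [jord_single, jord_single]
    simp only [hS, Matrix.add_apply, single_apply]
    grind
  replace h1 := congrArg φ h1
  replace h3 := congrArg φ h3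
  rw [H.mul, hD'] at h1
  rw [H.mul, H.mul, H.unit, H.unit] at h3
  ext k l
  have e1 := congrFun₂ h1 k l
  have e3 := congrFun₂ h3 k l
  rw [jord_single, jord_single] at e3
  rw [hD, jord_diagonal] at e1
  simp only [Matrix.add_apply, single_apply]
  grind

/-- The image of `S = E i j + E j i` inherits the relation `S * S = E i i + E j j`. -/
lemma swap_sq {i j : ι} (hij : i ≠ j) :
    φ (single i j 1 + single j i 1) i j * φ (single i j 1 + single j i 1) j i = 1 := by
  set S : Matrix ι ι F := single i j 1 + single j i 1 with hS
  set D : Matrix ι ι F := diagonal fun k => if k = i ∨ k = j then 1 else 0 with hD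
  have hD' : φ D = D := by
    rw [hD, H.map_diagonal h2]
    congr 1
    ext k
    split_ifs <;> simp [H.unit, H.zero]
  have h1 : jord S S = D := by
    ext k l
    rw [hS, jord_add, ← hS, Matrix.add_apply, jord_single, jord_single]
    simp only [hS, hD, Matrix.add_apply, single_apply, diagonal_apply]
    grind
  replace h1 := congrArg φ h1
  rw [H.mul, hD'] at h1
  have e := congrFun₂ h1 i i
  have hZ := H.map_offdiag h2 hij 1 1
  rw [← hS] at hZ
  generalize φ S = Z at *
  rw [hZ, jord_add, ← hZ, Matrix.add_apply, jord_single, jord_single] at e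
  simp only [hD, diagonal_apply] at e
  grind

/-- The scalar maps induced on the lines through the `E i i` all agree; apply `φ` to
`(c • S) ∘ S = c • (E i i + E j j)` with `S = E i j + E j i`. -/
lemma scalar_eq (i j : ι) (c : F) : φ (single i i c) i i = φ (single j j c) j j := by
  by_cases hij : i = j
  · rw [hij]
  have hz := H.swap_sq h2 hij
  have hZ := H.map_offdiag h2 hij 1 1
  set S : Matrix ι ι F := single i j 1 + single j i 1 with hS
  have h1 : jord (jord (diagonal fun _ => c) S) S = diagonal fun k => if k = i ∨ k = j then c else 0 := by
    have : jord (diagonal fun _ => c) S = single i j c + single j i c := by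
      ext k l
      rw [jord_diagonal]
      simp only [hS, Matrix.add_apply, single_apply]
      grind
    rw [this]
    ext k l
    rw [jord_add, Matrix.add_apply, jord_single, jord_single]
    simp only [hS, Matrix.add_apply, single_apply, diagonal_apply]
    grind
  replace h1 := congrArg φ h1
  rw [H.mul, H.mul, H.map_diagonal h2, H.map_diagonal h2] at h1
  generalize φ S = Z at *
  have e := congrFun₂ h1 i i
  rw [jord_comm] at e
  nth_rw 1 [hZ] at e
  rw [jord_add, Matrix.add_apply, jord_single, jord_single] at e
  simp only [jord_diagonal, diagonal_apply] at e
  grind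

/-! ### The scalar map and the diagonal entries -/

variable {ω : F → F} (hω : ∀ i c, φ (single i i c) i i = ω c)
include hω

lemma diag (d : ι → F) : φ (diagonal d) = diagonal fun i => ω (d i) := by
  rw [H.map_diagonal h2]; simp only [hω]

lemma smul (c : F) (X : Matrix ι ι F) : φ (c • X) = ω c • φ X := by
  have : c • X = jord (diagonal fun _ => c) X := by
    ext k l
    rw [jord_diagonal, Matrix.smul_apply, smul_eq_mul]
    grind
  rw [this, H.mul, H.diag h2 hω]
  ext k l
  rw [jord_diagonal, Matrix.smul_apply, smul_eq_mul]
  grind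

lemma omega_zero [Nonempty ι] : ω 0 = 0 := by
  obtain ⟨i⟩ := ‹Nonempty ι›
  simp [← hω i, H.zero]

lemma omega_one [Nonempty ι] : ω 1 = 1 := by
  obtain ⟨i⟩ := ‹Nonempty ι›
  simp [← hω i, H.unit]

lemma omega_mul [Nonempty ι] (a b : F) : ω (a * b) = ω a * ω b := by
  obtain ⟨i⟩ := ‹Nonempty ι›
  have := congrFun₂ (H.smul h2 hω a (single i i b)) i i
  rw [smul_single, Matrix.smul_apply, smul_eq_mul, hω, smul_eq_mul, hω] at this
  exact this

/-- Apply `φ` to `E i i ∘ S = 2⁻¹ • S` with `S = E i j + E j i`. -/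
lemma omega_half {i j : ι} (hij : i ≠ j) : ω 2⁻¹ = 2⁻¹ := by
  have hz := H.swap_sq h2 hij
  have hZ := H.smul h2 hω 2⁻¹ (single i j 1 + single j i 1)
  have : (2 : F)⁻¹ • (single i j (1 : F) + single j i 1) =
      jord (single i i 1) (single i j 1 + single j i 1) := by
    ext k l
    rw [jord_single]
    simp only [Matrix.smul_apply, smul_eq_mul, Matrix.add_apply, single_apply]
    grind
  rw [this, H.mul, H.unit] at hZ
  have := congrFun₂ hZ i j
  rw [jord_single, Matrix.smul_apply, smul_eq_mul] at this
  grind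

lemma omega_eighth {i j : ι} (hij : i ≠ j) : ω 8⁻¹ = 8⁻¹ := by
  have : Nonempty ι := ⟨i⟩
  have h := H.omega_half h2 hω hij
  have : (8 : F)⁻¹ = 2⁻¹ * (2⁻¹ * 2⁻¹) := by
    rw [← mul_inv, ← mul_inv]; norm_num
  rw [this, H.omega_mul h2 hω, H.omega_mul h2 hω, h]

omit hω in
lemma map_unit {i j : ι} (hij : i ≠ j) : φ (single i j 1) =
      single i j (φ (single i j 1) i j) + single j i (φ (single i j 1) j i) := by
  simpa using H.map_offdiag h2 hij 1 0

lemma unit_ne_zero {i j : ι} (hij : i ≠ j) :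
    φ (single i j 1) i j ≠ 0 ∨ φ (single i j 1) j i ≠ 0 := by
  by_contra! h
  have hZ := H.map_unit h2 hij
  rw [h.1, h.2] at hZ
  simp only [single_zero, add_zero] at hZ
  have : jord (single i j (1 : F)) (single j i 1) =
    (2⁻¹ : F) • diagonal fun k => if k = i ∨ k = j then 1 else 0 := by
    ext k l
    rw [jord_single]
    simp only [Matrix.smul_apply, smul_eq_mul, single_apply, diagonal_apply]
    grind
  have := congrArg φ this
  rw [H.mul, hZ, H.smul h2 hω, H.omega_half h2 hω hij, H.diag h2 hω] at this
  have hii := congrFun₂ this i i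
  have : Nonempty ι := ⟨i⟩
  simp [jord, H.omega_one h2 hω] at hii
  exact h2 hii.symm

/-- The `(i, i)` entry of `Y` is recovered from the product
`E i i ∘ (E j j ∘ (Z ∘ (E i i ∘ Y))) = (Y i i / 8) • Z`, valid for all `Z` in the span of `E i j`
and `E j i`; apply `φ` to it with `Z = E i j`. -/
lemma map_diag_entry {i j : ι} (hij : i ≠ j) (X : Matrix ι ι F) : φ X i i = ω (X i i) := by
  have : Nonempty ι := ⟨i⟩
  have h : ∀ (a b : F) (Y : Matrix ι ι F), jord (single i i 1) (jord (single j j 1)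
      (jord (single i j a + single j i b) (jord (single i i 1) Y))) =
      (8⁻¹ * Y i i) • (single i j a + single j i b) := by
    intro a b Y
    have : (8 : F) ≠ 0 := by
      have : (8 : F) = 2 * (2 * 2) := by norm_num
      rw [this]; simp [h2]
    ext k l
    simp only [jord_add, jord_single, Matrix.add_apply, Matrix.smul_apply, smul_eq_mul, single_apply]
    grind
  have e := congrArg φ (h 1 0 X)
  simp only [single_zero, add_zero] at e
  rw [H.mul, H.mul, H.mul, H.mul, H.unit, H.unit, H.smul h2 hω, H.omega_mul h2 hω,
    H.omega_eighth h2 hω hij, H.map_unit h2 hij, h] at e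
  have e1 := congrFun₂ e i j
  have e2 := congrFun₂ e j i
  have e0 := H.unit_ne_zero h2 hω hij
  have h8 : (8 : F)⁻¹ ≠ 0 := by
    have : (8 : F) = 2 * (2 * 2) := by norm_num
    rw [this]; simp [h2]
  simp only [Matrix.add_apply, Matrix.smul_apply, smul_eq_mul, single_apply] at e1 e2
  grind

/-- Apply `φ` to `(a • E i i + b • E j j) ∘ E i j = ((a + b) / 2) • E i j`. -/
lemma omega_add {i j : ι} (hij : i ≠ j) (a b : F) : ω (a + b) = ω a + ω b := by
  have : Nonempty ι := ⟨i⟩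
  set d : ι → F := fun k => if k = i then a else if k = j then b else 0 with hd
  have h : jord (diagonal d) (single i j (1 : F)) = (2⁻¹ * (a + b)) • single i j 1 := by
    ext k l
    rw [jord_diagonal]
    simp only [hd, Matrix.smul_apply, smul_eq_mul, single_apply]
    grind
  have e := congrArg φ h
  rw [H.mul, H.diag h2 hω, H.smul h2 hω, H.omega_mul h2 hω, H.omega_half h2 hω hij] at e
  have e1 := congrFun₂ e i j
  have e2 := congrFun₂ e j i
  have e0 := H.unit_ne_zero h2 hω hij
  simp only [jord_diagonal, hd, Matrix.smul_apply, smul_eq_mul] at e1 e2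
  grind

/-! ### The off-diagonal entries -/

/-- Compare the `(i, i)` entries of `φ (E i j ∘ X)` and `φ (E i j) ∘ φ X`. -/
lemma entry_relation {i j : ι} (hij : i ≠ j) (X : Matrix ι ι F) :
    φ (single i j 1) i j * φ X j i + φ (single i j 1) j i * φ X i j = ω (X j i) := by
  have : Nonempty ι := ⟨i⟩
  have e := H.map_diag_entry h2 hω hij (jord (single i j 1) X)
  rw [H.mul, H.map_unit h2 hij, jord_add, Matrix.add_apply, jord_single, jord_single,
    jord_single] at e
  simp only [hij, if_true, if_false, add_zero, one_mul, H.omega_mul h2 hω,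
    H.omega_half h2 hω hij] at e
  grind

omit hω in
/-- `φ (E i j)` is a multiple of `E i j` or of `E j i`, because `E i j` squares to zero. -/
lemma unit_type {i j : ι} (hij : i ≠ j) :
    φ (single i j 1) i j * φ (single i j 1) j i = 0 := by
  have h : jord (single i j 1) (single i j 1) = (0 : Matrix ι ι F) := by
    simp [jord, hij.symm]
  have e := congrArg φ h
  rw [H.mul, H.zero] at e
  have e1 := congrFun₂ e i i
  rw [H.map_unit h2 hij] at e1
  rw [jord_add, Matrix.add_apply, jord_single, jord_single] at e1
  simp only [Matrix.add_apply, single_apply, Matrix.zero_apply] at e1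
  grind

/-- If `φ (E i j)` is a multiple of `E i j`, then `φ (E j i)` is the inverse multiple of `E j i`. -/
lemma type_symm {i j : ι} (hij : i ≠ j) (h : φ (single i j 1) j i = 0) :
    φ (single j i 1) i j = 0 ∧ φ (single i j 1) i j * φ (single j i 1) j i = 1 := by
  have : Nonempty ι := ⟨i⟩
  have e := H.entry_relation h2 hω hij (single j i 1)
  have e' := H.unit_type h2 hij.symm
  rw [single_apply_same, H.omega_one h2 hω, h] at e
  grind

/-- If `φ (E i j)` is a multiple of `E i j`, then `φ (E j k)` is a multiple of `E j k`, and the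
coefficients satisfy the cocycle relation; this comes from `E i j ∘ E j k = 2⁻¹ • E i k`. -/
lemma type_trans {i j k : ι} (hij : i ≠ j) (hjk : j ≠ k) (hik : i ≠ k)
    (h : φ (single i j 1) j i = 0) :
    φ (single j k 1) k j = 0 ∧
      φ (single i k 1) i k = φ (single i j 1) i j * φ (single j k 1) j k := by
  have e : jord (single i j (1 : F)) (single j k 1) = (2 : F)⁻¹ • single i k 1 := by
    ext a b
    rw [jord_single]
    simp only [Matrix.smul_apply, smul_eq_mul, single_apply]
    grind
  have e' := congrArg φ e
  rw [H.mul, H.smul h2 hω, H.omega_half h2 hω hij, H.map_unit h2 hij, h, single_zero, add_zero,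
    H.map_unit h2 hjk] at e'
  have e1 := congrFun₂ e' i k
  have e2 := congrFun₂ e' k i
  rw [jord_single, Matrix.smul_apply, smul_eq_mul] at e1 e2
  simp only [Matrix.add_apply, single_apply] at e1 e2
  have e3 := H.unit_ne_zero h2 hω hik
  have e4 := H.unit_type h2 hjk
  grind

lemma type_all {p q : ι} (hpq : p ≠ q) (h : φ (single p q 1) q p = 0) {i j : ι} (hij : i ≠ j) :
    φ (single i j 1) j i = 0 := by
  have step : ∀ {i j k : ι}, i ≠ j → j ≠ k → φ (single i j 1) j i = 0 →
      φ (single j k 1) k j = 0 := by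
    intro i j k hij hjk h
    by_cases hik : i = k
    · subst hik; exact (H.type_symm h2 hω hij h).1
    · exact (H.type_trans h2 hω hij hjk hik h).1
  by_cases hi : q = i
  · subst hi; exact step hpq hij h
  · exact step hi hij (step hpq hi h)

/-- If some `φ (E p q)` with `p ≠ q` is a multiple of `E p q`, then `φ` is a ring homomorphism applied
entrywise, followed by conjugation by a diagonal matrix. -/
lemma form {p q : ι} (hpq : p ≠ q) (h : φ (single p q 1) q p = 0) :
    ∃ T : Matrix ι ι F, IsUnit T ∧ ∃ σ : F →+* F, ∀ X, φ X = T * X.map σ * T⁻¹ := by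
  have : Nonempty ι := ⟨p⟩
  let σ : F →+* F :=
    { toFun := ω
      map_one' := H.omega_one h2 hω
      map_mul' := H.omega_mul h2 hω
      map_zero' := H.omega_zero h2 hω
      map_add' := H.omega_add h2 hω hpq }
  have hσ : ∀ c, σ c = ω c := fun _ => rfl
  have htype : ∀ {i j : ι}, i ≠ j → φ (single i j 1) j i = 0 :=
    fun hij => H.type_all h2 hω hpq h hij
  set a : ι → ι → F := fun i j => φ (single i j 1) i j with ha
  have hone : ∀ i, a i i = 1 := fun i => by simp [ha, H.unit]
  have hinv : ∀ i j, a i j * a j i = 1 := by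
    intro i j
    by_cases hij : i = j
    · subst hij; simp [hone]
    · exact (H.type_symm h2 hω hij (htype hij)).2
  have hcoc : ∀ i j k, a i k = a i j * a j k := by
    intro i j k
    by_cases hij : i = j
    · subst hij; simp [hone]
    by_cases hjk : j = k
    · subst hjk; simp [hone]
    by_cases hik : i = k
    · subst hik; rw [hone, hinv]
    · exact (H.type_trans h2 hω hij hjk hik (htype hij)).2
  have hX : ∀ X i j, φ X i j = a i j * ω (X i j) := by
    intro X i j
    by_cases hij : i = j
    · subst hij
      obtain ⟨k, hk⟩ : ∃ k, i ≠ k := by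
        by_cases hp : i = p
        · exact ⟨q, hp ▸ hpq⟩
        · exact ⟨p, hp⟩
      rw [hone, one_mul, H.map_diag_entry h2 hω hk]
    · have e := H.entry_relation h2 hω (Ne.symm hij) X
      rw [htype (Ne.symm hij), zero_mul, add_zero] at e
      rw [← e, ← mul_assoc]
      change _ = a i j * a j i * _
      rw [hinv, one_mul]
  have hT : diagonal (fun i => a i p) * diagonal (fun i => a p i) = 1 := by
    rw [diagonal_mul_diagonal]; simp [hinv]
  refine ⟨diagonal fun i => a i p, IsUnit.of_mul_eq_one _ hT, σ, fun X => ?_⟩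
  rw [inv_eq_right_inv hT]
  ext i j
  rw [mul_diagonal, diagonal_mul, map_apply, hσ, hX, hcoc i p j]
  ring

/-! ### Classification -/

omit hω in
lemma transpose : NormJ fun X => (φ X)ᵀ where
  mul X Y := by
    change (φ (jord X Y))ᵀ = _
    rw [H.mul]; simp [jord, add_comm]
  zero := by simp [H.zero]
  unit i := by simp [H.unit]

omit hω in
lemma classify [Nontrivial ι] : ∃ T : Matrix ι ι F, IsUnit T ∧ ∃ σ : F →+* F,
    (∀ X, φ X = T * X.map σ * T⁻¹) ∨ (∀ X, φ X = T * (X.map σ)ᵀ * T⁻¹) := by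
  obtain ⟨p, q, hpq⟩ := exists_pair_ne ι
  have hω : ∀ i c, φ (single i i c) i i = (fun c => φ (single p p c) p p) c :=
    fun i c => H.scalar_eq h2 i p c
  rcases mul_eq_zero.1 (H.unit_type h2 hpq) with h | h
  · obtain ⟨T, hT, σ, h⟩ := (H.transpose h2).form h2 hω hpq h
    refine ⟨(T⁻¹)ᵀ, ?_, σ, Or.inr fun X => ?_⟩
    · rw [isUnit_transpose]; exact (isUnit_nonsing_inv_iff).2 hT
    · have := congrArg Matrix.transpose (h X)
      rw [transpose_transpose] at this
      rw [this, ← transpose_nonsing_inv, nonsing_inv_nonsing_inv _ ((isUnit_iff_isUnit_det _).1 hT)]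
      simp [mul_assoc]
  · obtain ⟨T, hT, σ, h⟩ := H.form h2 hω hpq h
    exact ⟨T, hT, σ, Or.inl h⟩

end NormJ

theorem classify_zero [Nontrivial ι] (h2 : (2 : F) ≠ 0) {φ : Matrix ι ι F → Matrix ι ι F}
    (hφ : JMul φ) (h0 : φ 0 = 0) (hne : ∃ X, φ X ≠ 0) :
    ∃ T : Matrix ι ι F, IsUnit T ∧ ∃ σ : F →+* F,
    (∀ X, φ X = T * X.map σ * T⁻¹) ∨ (∀ X, φ X = T * (X.map σ)ᵀ * T⁻¹) := by
  obtain ⟨X₀, hX₀⟩ := hne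
  have hidem : ∀ P, P * P = P → φ P * φ P = φ P := by
    intro P hP
    rw [← jord_self h2, ← hφ, jord_self h2, hP]
  have hid : ∀ i, φ (single i i 1) * φ (single i i 1) = φ (single i i 1) :=
    fun i => hidem _ (by simp)
  obtain ⟨S, hS, hSQ⟩ := exists_conj (fun i => φ (single i i 1)) hid
    (fun i hi => hX₀ (kernel_all h2 hφ i hi X₀))
    (fun i j hij => idem_orth h2 (hid i) (by
      rw [← hφ, ← h0]
      congr 1
      simp [jord, hij, hij.symm]))
  have hdet := (isUnit_iff_isUnit_det _).1 hS
  have hSS : S * S⁻¹ = 1 := mul_nonsing_inv _ hdet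
  have hSS' : S⁻¹ * S = 1 := nonsing_inv_mul _ hdet
  have H : NormJ fun X => S⁻¹ * φ X * S := by
    refine ⟨fun X Y => ?_, by simp [h0], fun i => ?_⟩
    · have : ∀ A B : Matrix ι ι F, S⁻¹ * A * S * (S⁻¹ * B * S) = S⁻¹ * (A * B) * S := by
        intro A B
        calc _ = S⁻¹ * A * (S * S⁻¹) * B * S := by simp only [mul_assoc]
          _ = _ := by rw [hSS]; simp only [mul_assoc, mul_one]
      rw [hφ]
      simp only [jord, this]
      simp [mul_add, add_mul]
    · simp only [mul_assoc, hSQ]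
      rw [← mul_assoc, hSS', one_mul]
  obtain ⟨T, hT, σ, h⟩ := H.classify h2
  have hback : ∀ X, φ X = S * (S⁻¹ * φ X * S) * S⁻¹ := by
    intro X
    calc φ X = (S * S⁻¹) * φ X * (S * S⁻¹) := by simp [hSS]
      _ = _ := by simp only [mul_assoc]
  refine ⟨S * T, hS.mul hT, σ, ?_⟩
  rcases h with h | h
  · left; intro X
    rw [hback X, h X, Matrix.mul_inv_rev]; simp only [mul_assoc]
  · right; intro X
    rw [hback X, h X, Matrix.mul_inv_rev]; simp only [mul_assoc]

end

theorem stmt_0 {F : Type*} [Field F] (h2 : (2 : F) ≠ 0) (n : ℕ) (hn : 2 ≤ n)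
    (φ : Matrix (Fin n) (Fin n) F → Matrix (Fin n) (Fin n) F)
    (hφ : ∀ X Y : Matrix (Fin n) (Fin n) F,
      φ ((2 : F)⁻¹ • (X * Y + Y * X)) = (2 : F)⁻¹ • (φ X * φ Y + φ Y * φ X)) :
    Xor'
      (∃ P : Matrix (Fin n) (Fin n) F, P * P = P ∧ ∀ X, φ X = P)
      (∃ T : Matrix (Fin n) (Fin n) F, IsUnit T ∧ ∃ ω : F →+* F, Function.Injective ω ∧
        ((∀ X, φ X = T * (X.map ω) * T⁻¹) ∨ (∀ X, φ X = T * (X.map ω)ᵀ * T⁻¹))) := by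
  have hφ' : JMul φ := hφ
  have : Nontrivial (Fin n) := Fin.nontrivial_iff_two_le.2 hn
  have h01 : (0 : Matrix (Fin n) (Fin n) F) ≠ 1 := zero_ne_one
  refine (xor_iff_or_and_not_and _ _).2 ⟨?_, ?_⟩
  · set P := φ 0 with hPdef
    have hP : P * P = P := by
      rw [← jord_self h2, hPdef, ← hφ', jord_self h2, mul_zero]
    have habs : ∀ X, P * φ X = P ∧ φ X * P = P := by
      intro X
      apply idem_abs h2 hP
      rw [hPdef, ← hφ']
      simp [jord]
    by_cases hconst : ∀ X, φ X = P
    · exact Or.inl ⟨P, hP, hconst⟩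
    right
    push Not at hconst
    have hψ : JMul fun X => φ X - P := by
      intro X Y
      have e : (φ X - P) * (φ Y - P) + (φ Y - P) * (φ X - P) =
          φ X * φ Y + φ Y * φ X - (2 : F) • P := by
        simp only [sub_mul, mul_sub, (habs X).1, (habs X).2, (habs Y).1, (habs Y).2, hP, two_smul]
        abel
      change φ (jord X Y) - P = (2 : F)⁻¹ • _
      rw [e, hφ', jord, smul_sub, smul_smul, inv_mul_cancel₀ h2, one_smul]
    obtain ⟨T, hT, σ, h⟩ := classify_zero h2 hψ (sub_self _)
      (hconst.imp fun X hX => sub_ne_zero.2 hX)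
    have hTT : T * T⁻¹ = 1 := mul_nonsing_inv _ ((isUnit_iff_isUnit_det _).1 hT)
    have h1 : φ 1 - P = 1 := by
      rcases h with h | h <;> simpa [hTT] using h 1
    have hP0 : P = 0 := by
      have := congrArg (P * ·) h1
      simpa [mul_sub, (habs 1).1, hP] using this.symm
    simp only [hP0, sub_zero] at h
    exact ⟨T, hT, σ, σ.injective, h⟩
  · rintro ⟨⟨P, -, hc⟩, T, hT, σ, -, h⟩
    have hTT : T * T⁻¹ = 1 := mul_nonsing_inv _ ((isUnit_iff_isUnit_det _).1 hT)
    have e0 : φ 0 = 0 := by rcases h with h | h <;> simp [h]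
    have e1 : φ 1 = 1 := by rcases h with h | h <;> simp [h, hTT]
    exact h01 (by rw [← e0, ← e1, hc, hc])
end

section
/- Let n ≥ 2 and let φ : M_n(F) → M_n(F) be a nonzero map satisfying φ(X ∘ Y) = φ(X) ∘ φ(Y) for all X, Y ∈ M_n(F) and φ(0) = 0. Then there exists a unique map ω : F → F such that φ(λX) = ω(λ)·φ(X) for all λ ∈ F and all X ∈ M_n(F); moreover, this ω is an injective ring homomorphism of F. -/
/-!
Write `X ∘ Y` for the normalized Jordan product and `e i` for the diagonal matrix units.

* The zero set of `φ` absorbs Jordan products. If it contains some `e i`, it contains every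
  `∑ a ∈ A, e a` with `i ∈ A` (`sum_unit_mem_zeros`), hence `1`, and then `φ = 0`. So each
  `φ (e i)` is a nonzero idempotent. They are pairwise orthogonal, and there are as many of them as
  the size of the matrices, so a simultaneous conjugation brings them to the `e i`
  (`exists_conj_units`).
* After this conjugation, `φ (c • 1)` is diagonal, because it satisfies
  `φ (c • 1) ∘ e i = φ (c • e i) ∈ F e i`. It commutes with `φ P` for each idempotent `P`. For
  `P = E_ii + E_ij` the matrix `φ P` has a nonzero entry at `(i, j)` or `(j, i)`, which makes
  the diagonal entries of `φ (c • 1)` equal (`map_smul_one_diag_eq`). So `φ (c • 1) = ω c • 1`, and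
  `ω` is multiplicative.
* The matrix `X = φ E_ij` is supported on the positions `(i, j)` and `(j, i)`, and
  `e i ∘ X = ω (1/2) X`, so `ω (1/2) = 1/2`. Comparing entries in
  `φ (a e i + b e j) ∘ φ E_ij = φ ((a + b) / 2 • E_ij)` gives `ω a + ω b = ω (a + b)`.
-/

open Matrix

namespace JordanMul

set_option linter.unusedSectionVars false

variable {F ι : Type*} [Field F] [Fintype ι] [DecidableEq ι]

/-! ### The Jordan product -/

/-- The normalized Jordan product `X ∘ Y = (XY + YX) / 2`. -/
def J (X Y : Matrix ι ι F) : Matrix ι ι F := (2 : F)⁻¹ • (X * Y + Y * X)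

theorem J_comm (X Y : Matrix ι ι F) : J X Y = J Y X := by
  simp only [J, add_comm]

theorem J_self (h2 : (2 : F) ≠ 0) (X : Matrix ι ι F) : J X X = X * X := by
  rw [J, ← two_smul F (X * X), smul_smul, inv_mul_cancel₀ h2, one_smul]

theorem J_smul_one (h2 : (2 : F) ≠ 0) (c : F) (X : Matrix ι ι F) : J (c • 1) X = c • X := by
  simp only [J, smul_mul_assoc, mul_smul_comm, one_mul, mul_one]
  rw [← two_smul F (c • X), smul_smul, inv_mul_cancel₀ h2, one_smul]

theorem J_one (h2 : (2 : F) ≠ 0) (X : Matrix ι ι F) : J 1 X = X := by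
  simpa using J_smul_one h2 1 X

theorem J_zero (X : Matrix ι ι F) : J X 0 = 0 := by simp [J]

theorem zero_J (X : Matrix ι ι F) : J 0 X = 0 := by simp [J]

theorem J_diagonal_apply (d : ι → F) (X : Matrix ι ι F) (k l : ι) :
    J (diagonal d) X k l = 2⁻¹ * ((d k + d l) * X k l) := by
  simp only [J, Matrix.smul_apply, Matrix.add_apply, diagonal_mul, mul_diagonal, smul_eq_mul]
  ring

/-- The diagonal matrix unit at `i`. -/
def e (i : ι) : Matrix ι ι F := single i i 1

theorem e_eq (i : ι) : (e i : Matrix ι ι F) = diagonal (fun k => if k = i then 1 else 0) := by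
  ext k l
  by_cases hk : k = i <;> by_cases hl : l = i <;> by_cases hkl : k = l <;>
    simp_all [e, eq_comm]

theorem J_e_apply (i : ι) (X : Matrix ι ι F) (k l : ι) :
    J (e i) X k l = 2⁻¹ * (((if k = i then 1 else 0) + (if l = i then 1 else 0)) * X k l) := by
  rw [e_eq, J_diagonal_apply]

theorem e_mul_e (i : ι) : (e i * e i : Matrix ι ι F) = e i := by simp [e]

theorem J_e_smul (h2 : (2 : F) ≠ 0) (i : ι) (c : F) :
    J (e i) (c • e i) = (c • e i : Matrix ι ι F) := by
  have : J (e i) (c • e i) = c • J (e i) (e i : Matrix ι ι F) := by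
    simp only [J, mul_smul_comm, smul_mul_assoc, ← smul_add, smul_comm c]
  rw [this, J_self h2, e_mul_e]

theorem J_e_e {i j : ι} (h : i ≠ j) : J (e i) (e j : Matrix ι ι F) = 0 := by
  simp [J, e, h, h.symm]

/-- If `Q` is idempotent and `Q ∘ W = W`, then `Q` is a two-sided unit for `W`. -/
theorem absorb (h2 : (2 : F) ≠ 0) {Q W : Matrix ι ι F} (hQ : Q * Q = Q) (h : J Q W = W) :
    Q * W = W ∧ W * Q = W := by
  have h' : Q * W + W * Q = W + W := by
    rw [← two_smul F W, ← h, J, smul_smul, mul_inv_cancel₀ h2, one_smul, ← J, h]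
  have a1 : Q * W = Q * W * Q := by
    have := congrArg (Q * ·) h'
    simp only [mul_add, ← mul_assoc, hQ] at this
    exact (add_left_cancel this).symm
  have a2 : W * Q = Q * W * Q := by
    have := congrArg (· * Q) h'
    simp only [add_mul, mul_assoc, hQ] at this
    rw [mul_assoc]
    exact (add_right_cancel this).symm
  have h3 : (2 : F) • (Q * W) = (2 : F) • W := by
    rw [two_smul, two_smul, ← h', ← a1.trans a2.symm]
  have h4 : Q * W = W := smul_right_injective _ h2 h3
  exact ⟨h4, by rw [a2, ← a1, h4]⟩

theorem orth (h2 : (2 : F) ≠ 0) {P Q : Matrix ι ι F} (hP : P * P = P) (h : J P Q = 0) :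
    P * Q = 0 := by
  have h' : P * Q + Q * P = 0 := by
    have := congrArg ((2 : F) • ·) h
    simpa [J, smul_smul, h2] using this
  have a1 : P * Q + P * Q * P = 0 := by
    have := congrArg (P * ·) h'
    simpa only [mul_add, ← mul_assoc, hP, mul_zero] using this
  have a2 : P * Q * P + Q * P = 0 := by
    have := congrArg (· * P) h'
    simpa only [add_mul, mul_assoc, hP, zero_mul] using this
  have a3 : P * Q = Q * P := by
    rw [eq_neg_of_add_eq_zero_left a1, eq_neg_of_add_eq_zero_right a2]
  have : (2 : F) • (P * Q) = 0 := by
    rw [two_smul]; nth_rewrite 2 [a3]; exact h'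
  exact (smul_eq_zero.mp this).resolve_left h2

/-! ### The zero set and the images of the diagonal matrix units -/

/-- `φ` is a map that respects the Jordan product and fixes zero. -/
structure JMul (φ : Matrix ι ι F → Matrix ι ι F) : Prop where
  map_J : ∀ X Y, φ (J X Y) = J (φ X) (φ Y)
  map_zero : φ 0 = 0

theorem JMul.idem {φ : Matrix ι ι F → Matrix ι ι F} (hφ : JMul φ) (h2 : (2 : F) ≠ 0)
    {P : Matrix ι ι F} (hP : P * P = P) : φ P * φ P = φ P := by
  rw [← J_self h2, ← hφ.map_J, J_self h2, hP]

theorem JMul.zero_of_J {φ : Matrix ι ι F → Matrix ι ι F} (hφ : JMul φ)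
    {X : Matrix ι ι F} (hX : φ X = 0) (Y : Matrix ι ι F) : φ (J X Y) = 0 := by
  rw [hφ.map_J, hX, zero_J]

/-- The inductive step of `sum_unit_mem_zeros`: `(D + e i) ∘ (D + 2 E_ij + 2 E_ji)` is the matrix
`D + E_ij + E_ji`, whose square is `D + e i + e j`. -/
theorem zero_step {φ : Matrix ι ι F → Matrix ι ι F} (hφ : JMul φ) (h2 : (2 : F) ≠ 0)
    {A : Finset ι} {i j : ι} (hi : i ∉ A) (hj : j ∉ A) (hij : i ≠ j)
    (h : φ (∑ a ∈ A, e a + e i) = 0) : φ (∑ a ∈ A, e a + e i + e j) = 0 := by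
  set D : Matrix ι ι F := ∑ a ∈ A, e a with hD
  have left : ∀ k l : ι, k ∉ A → D * single k l (1 : F) = 0 := by
    intro k l hk
    rw [hD, Finset.sum_mul]
    refine Finset.sum_eq_zero fun a ha => ?_
    have : a ≠ k := fun h => hk (h ▸ ha)
    simp [e, this]
  have right : ∀ k l : ι, l ∉ A → single k l (1 : F) * D = 0 := by
    intro k l hl
    rw [hD, Finset.mul_sum]
    refine Finset.sum_eq_zero fun a ha => ?_
    have : l ≠ a := fun h => hl (h ▸ ha)
    simp [e, this]
  have DD : D * D = D := by
    nth_rewrite 2 [hD]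
    rw [Finset.mul_sum, hD]
    refine Finset.sum_congr rfl fun a ha => ?_
    rw [Finset.sum_mul, Finset.sum_eq_single_of_mem a ha, e_mul_e]
    intro b _ hb
    simp [e, hb]
  have off : ∀ p q r s : ι, q ≠ r → single p q (1 : F) * single r s (1 : F) = 0 := by
    intro p q r s h
    simp [h]
  have s1 : J (D + e i) (D + (2 : F) • single i j 1 + (2 : F) • single j i 1)
      = D + single i j 1 + single j i 1 := by
    simp only [J, e, mul_add, add_mul, mul_smul_comm, smul_mul_assoc, left _ _ hi, left _ _ hj,
      right _ _ hi, right _ _ hj, DD, single_mul_single_same, mul_one,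
      off _ _ _ _ hij, off _ _ _ _ hij.symm, smul_zero,
      add_zero, zero_add]
    ext k l
    simp only [Matrix.smul_apply, Matrix.add_apply, smul_eq_mul]
    field_simp
    ring
  have s2 : J (D + single i j 1 + single j i 1) (D + single i j 1 + single j i 1)
      = D + e i + e j := by
    rw [J_self h2]
    simp only [e, mul_add, add_mul, left _ _ hi, left _ _ hj,
      right _ _ hi, right _ _ hj, DD, single_mul_single_same, mul_one,
      off _ _ _ _ hij, off _ _ _ _ hij.symm,
      add_zero, zero_add]
    abel
  rw [← s2]
  apply hφ.zero_of_J
  rw [← s1]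
  exact hφ.zero_of_J h _

theorem sum_unit_mem_zeros {φ : Matrix ι ι F → Matrix ι ι F} (hφ : JMul φ) (h2 : (2 : F) ≠ 0)
    {i : ι} (h : φ (e i) = 0) (A : Finset ι) (hi : i ∉ A) : φ (∑ a ∈ A, e a + e i) = 0 := by
  induction A using Finset.induction_on with
  | empty => simpa using h
  | insert a A ha ih =>
    rw [Finset.mem_insert, not_or] at hi
    rw [Finset.sum_insert ha, show e a + ∑ a ∈ A, e a + e i
      = ∑ a ∈ A, (e a : Matrix ι ι F) + e i + e a by abel]
    exact zero_step hφ h2 hi.2 ha hi.1 (ih hi.2)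

theorem sum_e : ∑ a : ι, (e a : Matrix ι ι F) = 1 := by
  ext k l
  simp only [e_eq, Matrix.sum_apply, diagonal_apply, one_apply]
  by_cases h : k = l <;> simp [h]

theorem map_e_ne_zero {φ : Matrix ι ι F → Matrix ι ι F} (hφ : JMul φ) (h2 : (2 : F) ≠ 0)
    (hnz : φ ≠ 0) (i : ι) : φ (e i) ≠ 0 := by
  intro h
  have h1 := sum_unit_mem_zeros hφ h2 h (Finset.univ.erase i) (Finset.notMem_erase _ _)
  rw [Finset.sum_erase_add _ _ (Finset.mem_univ i), sum_e] at h1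
  apply hnz
  funext X
  rw [← J_one h2 X]
  exact hφ.zero_of_J h1 X

/-- A family of nonzero pairwise orthogonal idempotents indexed by the index set of the matrices is
simultaneously conjugate to the family of diagonal matrix units. The columns of the conjugating
matrix are nonzero vectors in the ranges of the idempotents. -/
theorem exists_conj_units (Q : ι → Matrix ι ι F) (hidem : ∀ i, Q i * Q i = Q i)
    (horth : ∀ i j, i ≠ j → Q i * Q j = 0) (hne : ∀ i, Q i ≠ 0) :
    ∃ U V : Matrix ι ι F, U * V = 1 ∧ V * U = 1 ∧ ∀ i, V * Q i * U = e i := by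
  have hcol : ∀ i, ∃ w : ι → F, Q i *ᵥ w ≠ 0 := by
    intro i
    by_contra! hcon
    exact hne i (Matrix.ext_of_mulVec_single fun j => by rw [hcon, zero_mulVec])
  choose w hw using hcol
  let u : ι → ι → F := fun i => Q i *ᵥ w i
  have hQu : ∀ i j, Q i *ᵥ u j = if i = j then u j else 0 := by
    intro i j
    simp only [u, mulVec_mulVec]
    split_ifs with h
    · subst h; rw [hidem]
    · rw [horth i j h, zero_mulVec]
  have hli : LinearIndependent F u := by
    rw [Fintype.linearIndependent_iff]
    intro g hg i
    have := congrArg (Q i *ᵥ ·) hg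
    simp only [mulVec_sum, mulVec_smul, hQu, mulVec_zero] at this
    simp only [smul_ite, smul_zero, Finset.sum_ite_eq, Finset.mem_univ, if_true] at this
    exact (smul_eq_zero.mp this).resolve_right (hw i)
  let U : Matrix ι ι F := (Matrix.of u)ᵀ
  have hU : IsUnit U := by
    rw [← Matrix.linearIndependent_cols_iff_isUnit]
    exact hli
  have hdet : IsUnit U.det := (Matrix.isUnit_iff_isUnit_det U).mp hU
  have hQU : ∀ i, Q i * U = U * e i := by
    intro i
    ext k l
    have := congrFun (hQu i l) k
    rw [e_eq, mul_diagonal]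
    simp only [mulVec, dotProduct] at this
    rw [Matrix.mul_apply]
    simp only [U, transpose_apply, of_apply]
    rw [this]
    by_cases h : i = l
    · simp [h]
    · simp [h, Ne.symm h]
  refine ⟨U, U⁻¹, mul_nonsing_inv U hdet, nonsing_inv_mul U hdet, fun i => ?_⟩
  rw [mul_assoc, hQU, ← mul_assoc, nonsing_inv_mul U hdet, one_mul]

/-! ### Maps fixing the diagonal matrix units -/

/-- If `c E_ij` were in the zero set, so would be `(c E_ij ∘ 2c⁻¹ E_ji) ∘ e i = e i`. -/
theorem map_single_ne_zero {φ : Matrix ι ι F → Matrix ι ι F} (hφ : JMul φ)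
    (h2 : (2 : F) ≠ 0) (he : ∀ i, φ (e i) = e i) {i j : ι} (hij : i ≠ j) {c : F} (hc : c ≠ 0) :
    φ (single i j c) ≠ 0 := by
  intro h
  have h1 := hφ.zero_of_J (hφ.zero_of_J h (single j i (2 * c⁻¹))) (e i)
  have h3 : J (J (single i j c) (single j i (2 * c⁻¹))) (e i) = e i := by
    rw [J_comm]
    ext k l
    rw [J_e_apply]
    have : c * (2 * c⁻¹) = 2 := by field_simp
    have h' : 2 * c⁻¹ * c = 2 := by field_simp
    simp only [J, e, single_mul_single_same, this, h', Matrix.smul_apply, Matrix.add_apply,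
      single_apply, smul_eq_mul]
    by_cases hk : k = i
    · by_cases hl : l = i
      · subst hk hl
        simp [hij.symm]
        field_simp
        norm_num
      · subst hk
        simp [hij.symm, Ne.symm hl]
    · by_cases hl : l = i
      · subst hl
        simp [hij.symm, Ne.symm hk]
      · simp [hk, hl, Ne.symm hk]
  rw [h3, he] at h1
  have := congrFun (congrFun h1 i) i
  simp [e] at this

/-- If `Z ∘ e i` is the image of a matrix `Y` absorbed by `e i`, then `Z ∘ e i` is a scalar multiple
of `e i`, so the `i`-th row and column of `Z` vanish off the diagonal. -/
theorem offdiag_zero {φ : Matrix ι ι F → Matrix ι ι F} (hφ : JMul φ)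
    (h2 : (2 : F) ≠ 0) (he : ∀ i, φ (e i) = e i) {Z Y : Matrix ι ι F} {i : ι}
    (hZ : J (e i) Z = φ Y)
    (hY : J (e i) Y = Y) {k : ι} (hk : k ≠ i) : Z i k = 0 ∧ Z k i = 0 := by
  have hW : J (e i) (J (e i) Z) = J (e i) Z := by
    rw [hZ]; nth_rewrite 1 [← he i]; rw [← hφ.map_J, hY]
  have key : ∀ x : F, 2⁻¹ * (2⁻¹ * x) = 2⁻¹ * x → x = 0 := by
    intro x hx
    field_simp at hx
    linear_combination -hx
  have a := congrFun (congrFun hW i) k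
  have b := congrFun (congrFun hW k) i
  rw [J_e_apply, J_e_apply] at a b
  simp only [hk, if_true, if_false, add_zero, zero_add, one_mul] at a b
  exact ⟨key _ a, key _ b⟩

theorem map_smul_one_diagonal {φ : Matrix ι ι F → Matrix ι ι F} (hφ : JMul φ)
    (h2 : (2 : F) ≠ 0) (he : ∀ i, φ (e i) = e i) (c : F) :
    φ (c • 1) = diagonal fun i => φ (c • 1) i i := by
  ext k l
  rw [diagonal_apply]
  split_ifs with h
  · rw [h]
  · refine (offdiag_zero hφ h2 he (Y := c • e k) ?_ (J_e_smul h2 k c) (Ne.symm h)).1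
    nth_rewrite 1 [← he k]
    rw [← hφ.map_J, J_comm, J_smul_one h2]

/-- The images of scalar matrices commute with the images of idempotents. -/
theorem map_smul_one_comm {φ : Matrix ι ι F → Matrix ι ι F} (hφ : JMul φ)
    (h2 : (2 : F) ≠ 0) (c : F) {P : Matrix ι ι F} (hP : P * P = P) :
    φ (c • 1) * φ P = φ P * φ (c • 1) := by
  set Z := φ (c • 1)
  set R := φ P
  have hR : R * R = R := hφ.idem h2 hP
  have hW : J R (J Z R) = J Z R := by
    rw [← hφ.map_J, ← hφ.map_J, J_smul_one h2]
    congr 1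
    have : J P (c • P) = c • J P P := by
      simp only [J, mul_smul_comm, smul_mul_assoc, ← smul_add, smul_comm c]
    rw [this, J_self h2, hP]
  obtain ⟨h3, h4⟩ := absorb h2 hR hW
  have h5 : (2 : F)⁻¹ ≠ 0 := inv_ne_zero h2
  simp only [J, mul_smul_comm, smul_mul_assoc] at h3 h4
  have h3 := smul_right_injective _ h5 h3
  have h4 := smul_right_injective _ h5 h4
  simp only [mul_add, ← mul_assoc, hR] at h3
  simp only [add_mul, mul_assoc, hR] at h4
  have h6 := add_right_cancel h3
  have h7 := add_left_cancel h4
  exact h6.symm.trans ((mul_assoc _ _ _).trans h7)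

theorem map_smul_one_diag_eq {φ : Matrix ι ι F → Matrix ι ι F} (hφ : JMul φ)
    (h2 : (2 : F) ≠ 0) (he : ∀ i, φ (e i) = e i) (c : F) (i j : ι) :
    φ (c • 1) i i = φ (c • 1) j j := by
  by_cases hij : i = j
  · rw [hij]
  set P : Matrix ι ι F := e i + single i j 1 with hPdef
  have hP : P * P = P := by
    simp [hPdef, e, mul_add, add_mul, Ne.symm hij]
  -- A nonzero entry of `φ P` at `(k, l)` equates the diagonal entries of `φ (c • 1)` at `k`, `l`.
  have hcomm := map_smul_one_comm hφ h2 c hP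
  rw [map_smul_one_diagonal hφ h2 he c] at hcomm
  have hent : ∀ k l, φ P k l ≠ 0 → φ (c • 1) k k = φ (c • 1) l l := by
    intro k l hkl
    have := congrFun (congrFun hcomm k) l
    rw [diagonal_mul, mul_diagonal, mul_comm] at this
    exact mul_left_cancel₀ hkl this
  -- `e j ∘ (e i ∘ ·)` keeps only the entries at `(i, j)` and `(j, i)`.
  have hJ : J (e j) (J (e i) P) = single i j (2⁻¹ * 2⁻¹) := by
    ext k l
    rw [J_e_apply, J_e_apply]
    simp only [hPdef, e, Matrix.add_apply, single_apply]
    by_cases hk : i = k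
    · subst hk
      by_cases hl : j = l
      · subst hl; simp [hij, Ne.symm hij]
      · by_cases hl' : i = l
        · subst hl'; simp [hij, Ne.symm hij]
        · simp [hl, hl']
    · simp [hk]
  have hne := map_single_ne_zero hφ h2 he hij
    (mul_ne_zero (inv_ne_zero h2) (inv_ne_zero h2))
  rw [← hJ, hφ.map_J, hφ.map_J, he, he] at hne
  by_contra hcon
  apply hne
  have z1 : φ P i j = 0 := by
    by_contra h; exact hcon (hent _ _ h)
  have z2 : φ P j i = 0 := by
    by_contra h; exact hcon (hent _ _ h).symm
  ext k l
  rw [J_e_apply, J_e_apply]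
  by_cases hki : k = i
  · subst hki
    by_cases hlj : l = j
    · subst hlj; simp [z1]
    · simp [hij, hlj]
  · by_cases hkj : k = j
    · subst hkj
      by_cases hli : l = i
      · subst hli; simp [z2]
      · simp [hki, hli]
    · by_cases hli : l = i
      · subst hli; simp [hkj, hij]
      · simp [hki, hli]

/-- The case of the theorem in which `φ` fixes the diagonal matrix units; `ω c` is the scalar with
`φ (c • 1) = ω c • 1`. -/
theorem normalized_result {φ : Matrix ι ι F → Matrix ι ι F} (hφ : JMul φ)
    (h2 : (2 : F) ≠ 0) (he : ∀ i, φ (e i) = e i) [Nontrivial ι] :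
    ∃ ω : F →+* F, ∀ (c : F) (X : Matrix ι ι F), φ (c • X) = ω c • φ X := by
  obtain ⟨i, j, hij⟩ := exists_pair_ne ι
  let w : F → F := fun c => φ (c • 1) i i
  have hw1 : ∀ c, φ (c • 1) = w c • 1 := by
    intro c
    rw [map_smul_one_diagonal hφ h2 he c, smul_one_eq_diagonal (w c)]
    exact congrArg diagonal (funext fun k => map_smul_one_diag_eq hφ h2 he c k i)
  have hw : ∀ (c : F) (X : Matrix ι ι F), φ (c • X) = w c • φ X := by
    intro c X
    rw [← J_smul_one h2 c X, hφ.map_J, hw1, J_smul_one h2]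
  have w0 : w 0 = 0 := by simp [w, hφ.map_zero]
  have w1 : w 1 = 1 := by
    have := hw 1 (e i)
    rw [one_smul, he] at this
    have := congrFun (congrFun this i) i
    simpa [e, eq_comm] using this
  have wmul : ∀ a b, w (a * b) = w a * w b := by
    intro a b
    have := hw a (b • e i)
    rw [smul_smul, hw, hw, he] at this
    have := congrFun (congrFun this i) i
    simpa [e] using this
  set X := φ (single i j 1) with hX
  have hXne : X ≠ 0 := map_single_ne_zero hφ h2 he hij one_ne_zero
  have t0 : w 2⁻¹ ≠ 0 := by
    intro h
    have := wmul 2⁻¹ 2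
    rw [inv_mul_cancel₀ h2, w1, h, zero_mul] at this
    exact one_ne_zero this
  have hi : J (e i) X = w 2⁻¹ • X := by
    nth_rewrite 1 [← he i]
    rw [hX, ← hφ.map_J, ← hw]
    congr 1
    simp [J, e, Ne.symm hij]
  have hj : J (e j) X = w 2⁻¹ • X := by
    nth_rewrite 1 [← he j]
    rw [hX, ← hφ.map_J, ← hw]
    congr 1
    simp [J, e, Ne.symm hij]
  -- `e i ∘` and `e j ∘` act on `X` by the same nonzero scalar, so only the positions where both
  -- `i` and `j` occur survive.
  have hother : ∀ k l, (k = i ∧ l = j) ∨ (k = j ∧ l = i) ∨ X k l = 0 := by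
    intro k l
    have a := congrFun (congrFun hi k) l
    have b := congrFun (congrFun hj k) l
    rw [J_e_apply, Matrix.smul_apply, smul_eq_mul] at a b
    by_cases hki : k = i
    · by_cases hlj : l = j
      · exact Or.inl ⟨hki, hlj⟩
      · right; right
        rw [if_neg (hki ▸ hij), if_neg hlj] at b
        simpa [t0] using b.symm
    · by_cases hkj : k = j
      · by_cases hli : l = i
        · exact Or.inr (Or.inl ⟨hkj, hli⟩)
        · right; right
          rw [if_neg hki, if_neg hli] at a
          simpa [t0] using a.symm
      · right; right
        by_cases hli : l = i
        · rw [if_neg hkj, if_neg (hli ▸ hij)] at b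
          simpa [t0] using b.symm
        · rw [if_neg hki, if_neg hli] at a
          simpa [t0] using a.symm
  have hent : X i j ≠ 0 ∨ X j i ≠ 0 := by
    by_contra! hcon
    apply hXne
    ext k l
    rcases hother k l with ⟨rfl, rfl⟩ | ⟨rfl, rfl⟩ | h
    · exact hcon.1
    · exact hcon.2
    · exact h
  have thalf : w 2⁻¹ = 2⁻¹ := by
    rcases hent with h | h
    · have a := congrFun (congrFun hi i) j
      rw [J_e_apply, Matrix.smul_apply, smul_eq_mul] at a
      simp only [if_true, if_neg (Ne.symm hij), add_zero, one_mul] at a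
      exact (mul_right_cancel₀ h a).symm
    · have a := congrFun (congrFun hi j) i
      rw [J_e_apply, Matrix.smul_apply, smul_eq_mul] at a
      simp only [if_true, if_neg (Ne.symm hij), zero_add, one_mul] at a
      exact (mul_right_cancel₀ h a).symm
  have wadd : ∀ a b, w (a + b) = w a + w b := by
    intro a b
    set D : Matrix ι ι F := a • e i + b • e j with hD
    have hDi : J (e i) (φ D) = φ (a • e i) := by
      nth_rewrite 1 [← he i]
      rw [← hφ.map_J]
      congr 1
      ext k l
      rw [J_e_apply]
      by_cases hk : k = i
      · subst hk
        by_cases hl : l = k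
        · subst hl; simp [hD, e, Ne.symm hij]; field_simp; norm_num
        · simp [hD, e, Ne.symm hij, Ne.symm hl]
      · by_cases hl : l = i
        · subst hl; simp [hD, e, Ne.symm hij, Ne.symm hk]
        · simp [hD, e, hk, hl, Ne.symm hk]
    have hDj : J (e j) (φ D) = φ (b • e j) := by
      nth_rewrite 1 [← he j]
      rw [← hφ.map_J]
      congr 1
      ext k l
      rw [J_e_apply]
      by_cases hk : k = j
      · subst hk
        by_cases hl : l = k
        · subst hl; simp [hD, e, hij]; field_simp; norm_num
        · simp [hD, e, hij, Ne.symm hl]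
      · by_cases hl : l = j
        · subst hl; simp [hD, e, hij, Ne.symm hk]
        · simp [hD, e, hk, hl, Ne.symm hk]
    have oi := fun k (hk : k ≠ i) => offdiag_zero hφ h2 he hDi (J_e_smul h2 i a) hk
    have oj := fun k (hk : k ≠ j) => offdiag_zero hφ h2 he hDj (J_e_smul h2 j b) hk
    have di : φ D i i = w a := by
      have := congrFun (congrFun hDi i) i
      rw [J_e_apply, hw, he, ← two_mul, if_pos rfl, mul_one, ← mul_assoc,
        inv_mul_cancel₀ h2] at this
      simpa [e] using this
    have dj : φ D j j = w b := by
      have := congrFun (congrFun hDj j) j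
      rw [J_e_apply, hw, he, ← two_mul, if_pos rfl, mul_one, ← mul_assoc,
        inv_mul_cancel₀ h2] at this
      simpa [e] using this
    have hDX : J (φ D) X = (w (a + b) * 2⁻¹) • X := by
      rw [hX, ← hφ.map_J, ← thalf, ← wmul, ← hw]
      congr 1
      simp [hD, J, e, add_mul, mul_add, Ne.symm hij, mul_comm, ← single_add]
    -- Rows and columns `i` and `j` of `φ D` vanish off the diagonal, so `φ D` acts on these entries
    -- as a diagonal matrix would.
    have hrow : ∀ k l, (k = i ∧ l = j) ∨ (k = j ∧ l = i) →
        J (φ D) X k l = 2⁻¹ * ((φ D k k + φ D l l) * X k l) := by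
      intro k l hkl
      have r1 : ∀ m, m ≠ k → φ D k m = 0 := by
        rcases hkl with ⟨rfl, rfl⟩ | ⟨rfl, rfl⟩
        · exact fun m hm => (oi m hm).1
        · exact fun m hm => (oj m hm).1
      have r2 : ∀ m, m ≠ l → φ D m l = 0 := by
        rcases hkl with ⟨rfl, rfl⟩ | ⟨rfl, rfl⟩
        · exact fun m hm => (oj m hm).2
        · exact fun m hm => (oi m hm).2
      simp only [J, Matrix.smul_apply, Matrix.add_apply, smul_eq_mul, Matrix.mul_apply]
      rw [Finset.sum_eq_single k (fun m _ hm => by rw [r1 m hm, zero_mul]) (by simp),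
        Finset.sum_eq_single l (fun m _ hm => by rw [r2 m hm, mul_zero]) (by simp)]
      ring
    have fin : ∀ x : F, x ≠ 0 → 2⁻¹ * ((w a + w b) * x) = w (a + b) * 2⁻¹ * x →
        w (a + b) = w a + w b := by
      intro x hx h
      field_simp at h
      exact h.symm
    rcases hent with h | h
    · have := hrow i j (Or.inl ⟨rfl, rfl⟩)
      rw [hDX, di, dj, Matrix.smul_apply, smul_eq_mul] at this
      exact fin _ h this.symm
    · have := hrow j i (Or.inr ⟨rfl, rfl⟩)
      rw [hDX, di, dj, Matrix.smul_apply, smul_eq_mul, add_comm (w b)] at this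
      exact fin _ h this.symm
  exact ⟨⟨⟨⟨w, w1⟩, wmul⟩, w0, wadd⟩, hw⟩

/-! ### The general case by conjugation -/

/-- The map `X ↦ V φ(X) U` fixes the diagonal matrix units when `V = U⁻¹` conjugates the `φ (e i)` to
the `e i`, and it has the same `ω` as `φ`. -/
theorem exists_hom [Nontrivial ι] {φ : Matrix ι ι F → Matrix ι ι F} (hφ : JMul φ)
    (h2 : (2 : F) ≠ 0) (hnz : φ ≠ 0) :
    ∃ ω : F →+* F, ∀ (c : F) (X : Matrix ι ι F), φ (c • X) = ω c • φ X := by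
  obtain ⟨U, V, hUV, hVU, hQ⟩ := exists_conj_units (fun i => φ (e i))
    (fun i => hφ.idem h2 (e_mul_e i))
    (fun i j hij => orth h2 (hφ.idem h2 (e_mul_e i)) (by
      rw [← hφ.map_J, J_e_e hij, hφ.map_zero]))
    (map_e_ne_zero hφ h2 hnz)
  have hmul : ∀ A B : Matrix ι ι F, V * (A * B) * U = V * A * U * (V * B * U) := by
    intro A B
    calc V * (A * B) * U = V * A * 1 * B * U := by simp only [mul_one, mul_assoc]
      _ = _ := by rw [← hUV]; simp only [mul_assoc]
  have hψ : JMul (fun X => V * φ X * U) := by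
    refine ⟨fun X Y => ?_, by simp [hφ.map_zero]⟩
    simp only [hφ.map_J]
    simp only [J, mul_smul_comm, smul_mul_assoc, mul_add, add_mul, ← hmul]
  obtain ⟨ω, hω⟩ := normalized_result hψ h2 hQ
  refine ⟨ω, fun c X => ?_⟩
  have back : ∀ A : Matrix ι ι F, U * (V * A * U) * V = A := by
    intro A
    calc U * (V * A * U) * V = (U * V) * A * (U * V) := by simp only [mul_assoc]
      _ = A := by rw [hUV, one_mul, mul_one]
  rw [← back (φ (c • X)), hω c X, mul_smul_comm, smul_mul_assoc, back]

end JordanMul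

theorem stmt_16 {F : Type*} [Field F] (h2 : (2 : F) ≠ 0) (n : ℕ) (hn : 2 ≤ n)
    (φ : Matrix (Fin n) (Fin n) F → Matrix (Fin n) (Fin n) F)
    (hφ : ∀ X Y : Matrix (Fin n) (Fin n) F,
      φ ((2 : F)⁻¹ • (X * Y + Y * X)) = (2 : F)⁻¹ • (φ X * φ Y + φ Y * φ X))
    (hnz : φ ≠ 0) (h0 : φ 0 = 0) :
    ∃ ω : F →+* F, Function.Injective ω ∧
      (∀ (l : F) (X : Matrix (Fin n) (Fin n) F), φ (l • X) = ω l • φ X) ∧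
      (∀ ω' : F → F,
        (∀ (l : F) (X : Matrix (Fin n) (Fin n) F), φ (l • X) = ω' l • φ X) → ω' = ⇑ω) := by
  have : Nontrivial (Fin n) := Fin.nontrivial_iff_two_le.mpr hn
  obtain ⟨ω, hω⟩ := JordanMul.exists_hom (φ := φ) ⟨hφ, h0⟩ h2 hnz
  refine ⟨ω, ω.injective, hω, fun ω' hω' => ?_⟩
  obtain ⟨X, hX⟩ := Function.ne_iff.mp hnz
  funext l
  exact smul_left_injective F hX ((hω' l X).symm.trans (hω l X))
end

section
/- Let m < n. A map φ : M_n(F) → M_m(F) satisfies φ(X ∘ Y) = φ(X) ∘ φ(Y) for all X, Y ∈ M_n(F) if and only if φ is constant, equal to some fixed idempotent matrix in M_m(F). -/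
/-!
The value `P = φ 0` is idempotent, and `P = P ∘ φ X` forces `P φ(X) = φ(X) P = P`; hence
`ψ = φ - P` is again multiplicative for the Jordan product, and `ψ 0 = 0`. It remains to show
`ψ = 0`.

The matrix units `E_ii` go to pairwise orthogonal idempotents of `M_m(F)`
(`mul_eq_zero_of_jordan`). Since `m < n`, one of these, say `ψ E_kk`, vanishes
(`exists_eq_zero_of_orthogonal`). The zero set of `ψ` is closed under Jordan multiplication by
arbitrary matrices. If it contains `D + E_kk`, with `D` a sum of diagonal matrix units other than
`E_kk` and `E_jj`, then it contains `D + E_kj + E_jk = (D + E_kk) ∘ (D + 2 E_kj + 2 E_jk)`, and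
therefore the square of this matrix, which is `D + E_kk + E_jj`. By induction it contains the
identity (`one_mem_zeros`), so `ψ X = ψ (1 ∘ X) = 0` for all `X`.

Jordan multiplicativity is used below in the division-free form
`2 Z = X Y + Y X → 2 φ(Z) = φ(X) φ(Y) + φ(Y) φ(X)`.
-/

open Matrix

/-- Jordan-orthogonal idempotents are orthogonal. -/
lemma mul_eq_zero_of_jordan {R : Type*} [Ring R] (hc : ∀ a : R, a + a = 0 → a = 0) {p q : R}
    (hp : p * p = p) (h : p * q + q * p = 0) : p * q = 0 := by
  have h1 : p * q + p * q * p = 0 := by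
    have := congrArg (fun x => p * x) h
    simpa [mul_add, ← mul_assoc, hp] using this
  have h2 : p * q * p + q * p = 0 := by
    have := congrArg (fun x => x * p) h
    simpa [add_mul, mul_assoc, hp] using this
  have h3 : p * q = q * p := by
    rw [eq_neg_of_add_eq_zero_left h1, eq_neg_of_add_eq_zero_right h2]
  apply hc
  nth_rewrite 2 [h3]
  exact h

/-- If `p` is idempotent and `p ∘ a = p`, then `p a = a p = p`: apply
`mul_eq_zero_of_jordan` to `a - p`. -/
lemma mul_eq_of_jordan {R : Type*} [Ring R] (hc : ∀ a : R, a + a = 0 → a = 0) {p a : R}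
    (hp : p * p = p) (h : p + p = p * a + a * p) : p * a = p ∧ a * p = p := by
  have h0 : p * (a - p) + (a - p) * p = 0 := by
    rw [mul_sub, sub_mul, hp]
    rw [← sub_eq_zero.2 h.symm]
    abel
  have h1 := mul_eq_zero_of_jordan hc hp h0
  rw [h1, zero_add, sub_mul, hp] at h0
  rw [mul_sub, hp] at h1
  exact ⟨sub_eq_zero.1 h1, sub_eq_zero.1 h0⟩

/-- More than `m` pairwise orthogonal idempotents of `M_m(F)` cannot all be nonzero: nonzero
vectors in their ranges would be linearly independent. -/
lemma exists_eq_zero_of_orthogonal {F : Type*} [Field F] {n m : ℕ} (hmn : m < n)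
    (p : Fin n → Matrix (Fin m) (Fin m) F) (hp : ∀ i, p i * p i = p i)
    (ho : ∀ i j, i ≠ j → p i * p j = 0) : ∃ k, p k = 0 := by
  by_contra! hne
  have hv : ∀ i, ∃ v : Fin m → F, p i *ᵥ v ≠ 0 := by
    intro i
    by_contra! hv
    apply hne i
    apply Matrix.ext_of_mulVec_single
    intro j
    rw [hv, Matrix.zero_mulVec]
  choose v hv using hv
  have hli : LinearIndependent F (fun i => p i *ᵥ v i) := by
    rw [Fintype.linearIndependent_iff]
    intro g hg j
    have h1 := congrArg (fun x => p j *ᵥ x) hg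
    simp only [Matrix.mulVec_sum, Matrix.mulVec_smul, Matrix.mulVec_mulVec,
      Matrix.mulVec_zero] at h1
    rw [Finset.sum_eq_single j] at h1
    · rw [hp] at h1
      exact (smul_eq_zero.1 h1).resolve_right (hv j)
    · intro i _ hi
      rw [ho j i hi.symm, Matrix.zero_mulVec, smul_zero]
    · simp
  have := hli.fintype_card_le_finrank
  simp at this
  omega

/-- A set of matrices containing `E_kk` and stable under Jordan multiplication by arbitrary
matrices contains the identity. -/
lemma one_mem_zeros {F : Type*} [Field F] {n : ℕ} (K : Set (Matrix (Fin n) (Fin n) F))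
    (hK : ∀ X Y Z, X ∈ K → Z + Z = X * Y + Y * X → Z ∈ K) (k : Fin n)
    (hk : Matrix.single k k (1 : F) ∈ K) : (1 : Matrix (Fin n) (Fin n) F) ∈ K := by
  have key : ∀ T : Finset (Fin n), k ∉ T →
      (∑ t ∈ T, Matrix.single t t (1 : F)) + Matrix.single k k 1 ∈ K := by
    intro T
    induction T using Finset.induction_on with
    | empty => intro _; simpa using hk
    | insert j T hj ih =>
      intro hkT
      rw [Finset.mem_insert, not_or] at hkT
      obtain ⟨hkj, hkT⟩ := hkT
      have ih := ih hkT
      rw [Finset.sum_insert hj]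
      set D : Matrix (Fin n) (Fin n) F := ∑ t ∈ T, Matrix.single t t (1 : F) with hD
      have hl : ∀ a b, a ∉ T → D * Matrix.single a b 1 = 0 := by
        intro a b ha
        rw [hD, Finset.sum_mul]
        refine Finset.sum_eq_zero fun t ht => ?_
        exact Matrix.single_mul_single_of_ne _ _ _ _ (ne_of_mem_of_not_mem ht ha) _
      have hr : ∀ a b, b ∉ T → Matrix.single a b 1 * D = 0 := by
        intro a b hb
        rw [hD, Finset.mul_sum]
        refine Finset.sum_eq_zero fun t ht => ?_
        exact Matrix.single_mul_single_of_ne _ _ _ _ (ne_of_mem_of_not_mem ht hb).symm _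
      have hDD : D * D = D := by
        nth_rewrite 1 [hD]
        rw [hD, Finset.sum_mul]
        refine Finset.sum_congr rfl fun t ht => ?_
        rw [Finset.mul_sum, Finset.sum_eq_single t]
        · simp
        · intro s _ hs
          exact Matrix.single_mul_single_of_ne _ _ _ _ hs.symm _
        · exact fun h => absurd ht h
      have hjk : j ≠ k := Ne.symm hkj
      have hX : D + (Matrix.single k j 1 + Matrix.single j k 1) ∈ K := by
        refine hK _ (D + (Matrix.single k j 1 + Matrix.single k j 1
          + (Matrix.single j k 1 + Matrix.single j k 1))) _ ih ?_
        simp only [mul_add, add_mul, hDD, hl _ _ hkT, hl _ _ hj, hr _ _ hkT, hr _ _ hj,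
          Matrix.single_mul_single_same, Matrix.single_mul_single_of_ne _ _ _ _ hjk,
          Matrix.single_mul_single_of_ne _ _ _ _ hkj, mul_one]
        abel
      refine hK _ (D + (Matrix.single k j 1 + Matrix.single j k 1)) _ hX ?_
      simp only [mul_add, add_mul, hDD, hl _ _ hkT, hl _ _ hj, hr _ _ hkT, hr _ _ hj,
        Matrix.single_mul_single_same, Matrix.single_mul_single_of_ne _ _ _ _ hjk,
        Matrix.single_mul_single_of_ne _ _ _ _ hkj, mul_one]
      abel
  have h := key (Finset.univ.erase k) (by simp)
  rw [Finset.sum_erase_add _ _ (Finset.mem_univ k)] at h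
  convert h using 1
  ext a b
  simp [Matrix.sum_apply, Matrix.single_apply, Matrix.one_apply, ite_and]

/-- The case `φ 0 = 0`: a Jordan-multiplicative map into smaller matrices is zero. -/
lemma eq_zero_of_jordan {F : Type*} [Field F] {n m : ℕ} (hmn : m < n)
    (hc : ∀ A : Matrix (Fin m) (Fin m) F, A + A = 0 → A = 0)
    (φ : Matrix (Fin n) (Fin n) F → Matrix (Fin m) (Fin m) F)
    (hφ : ∀ X Y Z, Z + Z = X * Y + Y * X → φ Z + φ Z = φ X * φ Y + φ Y * φ X)
    (h0 : φ 0 = 0) (X : Matrix (Fin n) (Fin n) F) : φ X = 0 := by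
  have hidem : ∀ i, φ (Matrix.single i i 1) * φ (Matrix.single i i 1)
      = φ (Matrix.single i i 1) := by
    intro i
    have h := hφ (Matrix.single i i 1) (Matrix.single i i 1) (Matrix.single i i 1) (by simp)
    rw [← sub_eq_zero]
    apply hc
    rw [← sub_eq_zero.2 h.symm]
    abel
  obtain ⟨k, hk⟩ := exists_eq_zero_of_orthogonal hmn (fun i => φ (Matrix.single i i 1)) hidem (by
    intro i j hij
    apply mul_eq_zero_of_jordan hc (hidem i)
    have h := hφ (Matrix.single i i 1) (Matrix.single j j 1) 0 (by
      rw [Matrix.single_mul_single_of_ne _ _ _ _ hij,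
        Matrix.single_mul_single_of_ne _ _ _ _ hij.symm])
    rw [h0, add_zero] at h
    exact h.symm)
  have hK : ∀ X Y Z, X ∈ {A | φ A = 0} → Z + Z = X * Y + Y * X → Z ∈ {A | φ A = 0} := by
    intro X Y Z hX hZ
    have h := hφ X Y Z hZ
    change φ X = 0 at hX
    rw [hX, zero_mul, mul_zero, add_zero] at h
    exact hc _ h
  exact hK 1 X X (one_mem_zeros _ hK k hk) (by simp)

theorem stmt_18 {F : Type*} [Field F] (h2 : (2 : F) ≠ 0) (n m : ℕ) (hmn : m < n)
    (φ : Matrix (Fin n) (Fin n) F → Matrix (Fin m) (Fin m) F) :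
    (∀ X Y : Matrix (Fin n) (Fin n) F,
      φ ((2 : F)⁻¹ • (X * Y + Y * X)) = (2 : F)⁻¹ • (φ X * φ Y + φ Y * φ X)) ↔
    (∃ P : Matrix (Fin m) (Fin m) F, P * P = P ∧ ∀ X, φ X = P) := by
  have hc : ∀ A : Matrix (Fin m) (Fin m) F, A + A = 0 → A = 0 := by
    intro A hA
    rw [← two_smul F] at hA
    exact (smul_eq_zero.1 hA).resolve_left h2
  constructor
  · intro h
    have hφ : ∀ X Y Z, Z + Z = X * Y + Y * X → φ Z + φ Z = φ X * φ Y + φ Y * φ X := by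
      intro X Y Z hZ
      have h1 := h X Y
      rw [← hZ, ← two_smul F Z, inv_smul_smul₀ h2] at h1
      rw [← two_smul F (φ Z), h1, smul_inv_smul₀ h2]
    have hP : φ 0 * φ 0 = φ 0 := by
      have h1 := hφ 0 0 0 (by simp)
      rw [← sub_eq_zero]
      apply hc
      rw [← sub_eq_zero.2 h1.symm]
      abel
    have hPX : ∀ X, φ 0 * φ X = φ 0 ∧ φ X * φ 0 = φ 0 := fun X =>
      mul_eq_of_jordan hc hP (hφ 0 X 0 (by simp))
    refine ⟨φ 0, hP, fun X => sub_eq_zero.1 ?_⟩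
    refine eq_zero_of_jordan hmn hc (fun X => φ X - φ 0) ?_ (sub_self _) X
    intro X Y Z hZ
    have h1 := hφ X Y Z hZ
    simp only [mul_sub, sub_mul, hP, (hPX X).1, (hPX X).2, (hPX Y).1, (hPX Y).2]
    rw [sub_add_sub_comm, h1]
    abel
  · rintro ⟨P, hP, h⟩ X Y
    rw [h, h, h, hP, ← two_smul F P, inv_smul_smul₀ h2]
end
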